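/- For all ξ, η ∈ M one has the Young-type inequality ξ·η ≤ f(ξ) + f*(η); consequently sup_{ξ ∈ M} ( ξ·η − f(ξ) ) ≤ f*(η) for every η ∈ M, i.e. the Fenchel conjugate of f is bounded above by f*. -/

import Mathlib

/-! For a competitor `v ∈ S` of `f ξ` and a competitor `w` of `fs η`, the conditions
`∫ ⟪w, v⟫ = 0` and `∫ w = η` give `⟪ξ, η⟫ = ∫ ⟪ξ + v, w⟫`. The pointwise Young inequality with the
conjugate exponents `p ω` and `p ω / (p ω - 1)` bounds the integrand by the sum of the two energy
densities, and the claim follows by taking both infima. The finiteness of the modulars of `v` and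
`w` enters only to make `w` and `⟪w, v⟫` integrable, which `∫ (f + g) = ∫ f + ∫ g` needs. -/

open MeasureTheory ENNReal
open scoped RealInnerProductSpace

/-- `Md d`: the space of symmetric `d × d` real matrices, identified (as in the paper)
with the Euclidean space `ℝ^{d(d+1)/2}`. -/
abbrev Md (d : ℕ) : Type := EuclideanSpace ℝ (Fin (d * (d + 1) / 2))

lemma mul_le_young {r a b : ℝ} (hr : 1 < r) (ha : 0 ≤ a) (hb : 0 ≤ b) :
    a * b ≤ a ^ r / r + b ^ (r / (r - 1)) / (r / (r - 1)) :=
  Real.young_inequality_of_nonneg ha hb (Real.HolderConjugate.conjExponent hr)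

lemma mul_le_rpow_add_rpow {r a b : ℝ} (hr : 1 < r) (ha : 0 ≤ a) (hb : 0 ≤ b) :
    a * b ≤ a ^ r + b ^ (r / (r - 1)) := by
  refine (mul_le_young hr ha hb).trans (add_le_add ?_ ?_)
  · exact div_le_self (Real.rpow_nonneg ha _) hr.le
  · refine div_le_self (Real.rpow_nonneg hb _) ?_
    rw [le_div_iff₀ (by linarith)]
    linarith

lemma ofReal_integral_le_lintegral_ofReal {Ω : Type*} [MeasurableSpace Ω] {P : Measure Ω}
    {g : Ω → ℝ} (hg : Integrable g P) :
    ENNReal.ofReal (∫ ω, g ω ∂P) ≤ ∫⁻ ω, ENNReal.ofReal (g ω) ∂P := by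
  rw [integral_eq_lintegral_pos_part_sub_lintegral_neg_part hg]
  exact (ENNReal.ofReal_le_ofReal (sub_le_self _ ENNReal.toReal_nonneg)).trans
    ENNReal.ofReal_toReal_le

lemma integrable_rpow_norm {Ω E : Type*} [MeasurableSpace Ω] {P : Measure Ω}
    [NormedAddCommGroup E] [MeasurableSpace E] [OpensMeasurableSpace E]
    {u : Ω → E} {r : Ω → ℝ} (hu : Measurable u) (hr : Measurable r)
    (hfin : ∫⁻ ω, ENNReal.ofReal (‖u ω‖ ^ r ω) ∂P < ⊤) :
    Integrable (fun ω => ‖u ω‖ ^ r ω) P := by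
  refine ⟨(hu.norm.pow hr).aestronglyMeasurable, ?_⟩
  rw [hasFiniteIntegral_iff_ofReal (Filter.Eventually.of_forall fun ω =>
    Real.rpow_nonneg (norm_nonneg _) _)]
  exact hfin

/-- Young-type inequality: `ξ·η ≤ f(ξ) + f*(η)` for all `ξ, η ∈ M`;
consequently the Fenchel conjugate of `f` is bounded above by `f*`:
`sup_ξ (ξ·η − f(ξ)) ≤ f*(η)` (interpreted in `[0,∞]`). -/
theorem stmt9
    {d : ℕ} (hd : 1 ≤ d)
    {Ω : Type*} [MeasurableSpace Ω] (P : Measure Ω) [IsProbabilityMeasure P]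
    (p : Ω → ℝ) (hp : Measurable p)
    (α β : ℝ) (hα : 1 < α) (hαp : ∀ ω, α ≤ p ω) (hpβ : ∀ ω, p ω ≤ β)
    -- `S` is a linear subspace of the measurable functions `Ω → M` with finite
    -- `p(⬝)`-integral and zero mean:
    (S : Set (Ω → Md d))
    (hSmeas : ∀ w ∈ S, Measurable w)
    (hSfin : ∀ w ∈ S, ∫⁻ ω, ENNReal.ofReal (‖w ω‖ ^ p ω) ∂P < ⊤)
    (hSzero : (0 : Ω → Md d) ∈ S)
    (hSadd : ∀ w₁ ∈ S, ∀ w₂ ∈ S, w₁ + w₂ ∈ S)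
    (hSsmul : ∀ (r : ℝ), ∀ w ∈ S, r • w ∈ S)
    (hSmean : ∀ w ∈ S, ∫ ω, w ω ∂P = 0)
    (f : Md d → ℝ≥0∞)
    (hf : ∀ ξ : Md d,
      f ξ = ⨅ w : S, ∫⁻ ω, ENNReal.ofReal (‖ξ + (w : Ω → Md d) ω‖ ^ p ω / p ω) ∂P)
    (fs : Md d → ℝ≥0∞)
    (hfs : ∀ ξ : Md d,
      fs ξ = ⨅ (w : Ω → Md d) (_ : Measurable w)
        (_ : ∫⁻ ω, ENNReal.ofReal (‖w ω‖ ^ (p ω / (p ω - 1))) ∂P < ⊤)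
        (_ : ∀ v ∈ S, ∫ ω, ⟪w ω, v ω⟫ ∂P = 0)
        (_ : ∫ ω, w ω ∂P = ξ),
        ∫⁻ ω, ENNReal.ofReal (‖w ω‖ ^ (p ω / (p ω - 1)) / (p ω / (p ω - 1))) ∂P) :
    (∀ ξ η : Md d, ENNReal.ofReal ⟪ξ, η⟫ ≤ f ξ + fs η)
    ∧ (∀ η : Md d, (⨆ ξ : Md d, ENNReal.ofReal ⟪ξ, η⟫ - f ξ) ≤ fs η) := by
  have hp1 : ∀ ω, 1 < p ω := fun ω => hα.trans_le (hαp ω)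
  have hq : Measurable fun ω => p ω / (p ω - 1) := hp.div (hp.sub_const 1)
  have key : ∀ ξ η : Md d, ENNReal.ofReal ⟪ξ, η⟫ ≤ f ξ + fs η := by
    intro ξ η
    rw [hf, hfs]
    simp only [ENNReal.iInf_add, ENNReal.add_iInf]
    refine le_iInf fun w => le_iInf fun hw => le_iInf fun hwfin => le_iInf fun hwS =>
      le_iInf fun hwη => le_iInf fun v => ?_
    obtain ⟨v, hv⟩ := v
    have hvm := hSmeas v hv
    have hvI := integrable_rpow_norm hvm hp (hSfin v hv)
    have hwI := integrable_rpow_norm hw hq hwfin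
    have hwint : Integrable w P := by
      refine ((integrable_const (1 : ℝ)).add hwI).mono' hw.aestronglyMeasurable
        (Filter.Eventually.of_forall fun ω => ?_)
      simpa using mul_le_rpow_add_rpow (hp1 ω) zero_le_one (norm_nonneg (w ω))
    have hwvint : Integrable (fun ω => ⟪w ω, v ω⟫) P := by
      refine (hvI.add hwI).mono' (hw.inner hvm).aestronglyMeasurable
        (Filter.Eventually.of_forall fun ω => ?_)
      refine (norm_inner_le_norm _ _).trans ?_
      rw [mul_comm]
      exact mul_le_rpow_add_rpow (hp1 ω) (norm_nonneg _) (norm_nonneg _)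
    have hξw : Integrable (fun ω => ⟪ξ, w ω⟫) P := hwint.const_inner ξ
    have hmean : ∫ ω, (⟪ξ, w ω⟫ + ⟪w ω, v ω⟫) ∂P = ⟪ξ, η⟫ := by
      rw [integral_add hξw hwvint, hwS v hv, add_zero, integral_inner hwint, hwη]
    rw [← hmean]
    refine (ofReal_integral_le_lintegral_ofReal (hξw.add hwvint)).trans ?_
    have hm : Measurable fun ω => ENNReal.ofReal (‖ξ + v ω‖ ^ p ω / p ω) :=
      (((measurable_const.add hvm).norm.pow hp).div hp).ennreal_ofReal
    rw [← lintegral_add_left hm]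
    refine lintegral_mono fun ω => ?_
    refine (ENNReal.ofReal_le_ofReal ?_).trans ENNReal.ofReal_add_le
    rw [Pi.add_apply, real_inner_comm (v ω) (w ω), ← inner_add_left]
    exact (real_inner_le_norm _ _).trans
      (mul_le_young (hp1 ω) (norm_nonneg _) (norm_nonneg _))
  exact ⟨key, fun η => iSup_le fun ξ => tsub_le_iff_left.2 (key ξ η)⟩
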